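/- arXiv:2401.08080 — 4 statements merged into one kernel-verified Lean document; each statement's English description precedes it below -/
import Mathlib

section
/- Let f : ℝ → ℝ be continuous, let F : ℝ → ℝ satisfy HasDerivAt F (f x) x for every x, and let g : ℝ → ℝ be twice differentiable at a point x with g'(x) ≠ 0. Then the function x ↦ F(g(x))/g'(x) has derivative at x equal to f(g(x)) − F(g(x))·g''(x)/(g'(x))², i.e. the derivative of F(g(x))/g'(x) differs from f(g(x)) exactly by the term F(g(x))·(1/g'(x))' = −F(g(x))·g''(x)/(g'(x))². -/
open Real Filter

theorem stmt_0 (f F g g' : ℝ → ℝ) (x g'' : ℝ)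
    (hf : Continuous f)
    (hF : ∀ y, HasDerivAt F (f y) y)
    (hg : ∀ᶠ y in nhds x, HasDerivAt g (g' y) y)
    (hg' : HasDerivAt g' g'' x)
    (hg'x : g' x ≠ 0) :
    HasDerivAt (fun y => F (g y) / g' y)
      (f (g x) - F (g x) * g'' / (g' x) ^ 2) x := by
  have h1 : HasDerivAt (fun y => F (g y)) (f (g x) * g' x) x :=
    (hF (g x)).comp x hg.self_of_nhds
  have h2 := h1.fun_div hg' hg'x
  have e : f (g x) - F (g x) * g'' / (g' x) ^ 2 = (f (g x) * g' x * g' x - F (g x) * g'') / (g' x) ^ 2 := by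
    field_simp
  rw [e]
  exact h2
end

section
/- Let f : ℝ → ℝ be continuous, let F : ℝ → ℝ be an antiderivative of f (HasDerivAt F (f x) x for all x), and let g : ℝ → ℝ be twice continuously differentiable on an interval [a,b] with g'(x) ≠ 0 for all x ∈ [a,b]. Then ∫_a^b f(g(x)) dx = F(g(b))/g'(b) − F(g(a))/g'(a) + ∫_a^b F(g(x))·g''(x)/(g'(x))² dx. -/
open Real MeasureTheory intervalIntegral

theorem stmt_1 (f F g g' g'' : ℝ → ℝ) (a b : ℝ) (hab : a ≤ b)
    (hf : Continuous f)
    (hF : ∀ y, HasDerivAt F (f y) y)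
    (hg : ∀ y ∈ Set.Icc a b, HasDerivAt g (g' y) y)
    (hg' : ∀ y ∈ Set.Icc a b, HasDerivAt g' (g'' y) y)
    (hg'' : ContinuousOn g'' (Set.Icc a b))
    (hne : ∀ y ∈ Set.Icc a b, g' y ≠ 0) :
    ∫ x in a..b, f (g x) =
      F (g b) / g' b - F (g a) / g' a +
        ∫ x in a..b, F (g x) * g'' x / (g' x) ^ 2 := by
  have hu : Set.uIcc a b = Set.Icc a b := Set.uIcc_of_le hab
  have cg : ContinuousOn g (Set.Icc a b) := fun y hy => (hg y hy).continuousAt.continuousWithinAt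
  have cg' : ContinuousOn g' (Set.Icc a b) := fun y hy => (hg' y hy).continuousAt.continuousWithinAt
  have cF : Continuous F := continuous_iff_continuousAt.2 fun y => (hF y).continuousAt
  have i1 : IntervalIntegrable (fun x => f (g x)) volume a b := by
    apply ContinuousOn.intervalIntegrable
    rw [hu]
    exact hf.comp_continuousOn cg
  have i2 : IntervalIntegrable (fun x => F (g x) * g'' x / (g' x) ^ 2) volume a b := by
    apply ContinuousOn.intervalIntegrable
    rw [hu]
    exact ((cF.comp_continuousOn cg).mul hg'').div (cg'.pow 2) fun y hy => pow_ne_zero 2 (hne y hy)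
  have key := intervalIntegral.integral_eq_sub_of_hasDerivAt (a := a) (b := b)
    (f := fun x => F (g x) / g' x)
    (f' := fun x => f (g x) - F (g x) * g'' x / (g' x) ^ 2) (fun x hx => by
      rw [hu] at hx
      have h0 := hne x hx
      have h := ((hF (g x)).comp x (hg x hx)).div (hg' x hx) h0
      refine h.congr_deriv ?_
      simp only [Function.comp]
      field_simp) (i1.sub i2)
  rw [intervalIntegral.integral_sub i1 i2] at key
  linarith
end

section
/- The function x ↦ (cos x · sin(cos x) − sin 1)/(sin x)² tends to −(cos 1 + sin 1)/2 as x tends to 0 along nonzero values. -/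
open Real Filter Topology

theorem stmt_11 :
    Filter.Tendsto
      (fun x : ℝ => (Real.cos x * Real.sin (Real.cos x) - Real.sin 1) / (Real.sin x) ^ 2)
      (nhdsWithin 0 {x : ℝ | x ≠ 0})
      (nhds (-(Real.cos 1 + Real.sin 1) / 2)) := by
  have hd : HasDerivAt (fun c : ℝ => c * Real.sin c) (1 * Real.sin 1 + 1 * Real.cos 1) 1 :=
    (hasDerivAt_id (1 : ℝ)).mul (Real.hasDerivAt_sin 1)
  have hs := hasDerivAt_iff_tendsto_slope.mp hd
  have hne : ∀ᶠ x : ℝ in nhdsWithin 0 {x : ℝ | x ≠ 0}, Real.cos x ≠ 1 := by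
    have h1 : ∀ᶠ x : ℝ in nhdsWithin 0 {x : ℝ | x ≠ 0}, x ∈ Set.Ioo (-1 : ℝ) 1 :=
      nhdsWithin_le_nhds (Ioo_mem_nhds (by norm_num) (by norm_num))
    filter_upwards [h1, self_mem_nhdsWithin] with x hx hx0 hc
    have hpi := Real.pi_gt_three
    exact hx0 ((Real.cos_eq_one_iff_of_lt_of_lt (by linarith [hx.1]) (by linarith [hx.2])).mp hc)
  have hcos : Tendsto Real.cos (nhdsWithin 0 {x : ℝ | x ≠ 0}) (𝓝 1) := by
    have h := Real.continuous_cos.tendsto 0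
    rw [Real.cos_zero] at h
    exact h.mono_left nhdsWithin_le_nhds
  have hcos' : Tendsto Real.cos (nhdsWithin 0 {x : ℝ | x ≠ 0}) (𝓝[≠] 1) :=
    tendsto_nhdsWithin_iff.mpr ⟨hcos, hne⟩
  have h2 := ((hs.comp hcos').neg).div (hcos.const_add 1) (by norm_num)
  have e : -(1 * Real.sin 1 + 1 * Real.cos 1) / (1 + 1) = -(Real.cos 1 + Real.sin 1) / 2 := by
    ring
  rw [e] at h2
  have hpos : ∀ᶠ x : ℝ in nhdsWithin 0 {x : ℝ | x ≠ 0}, 0 < Real.cos x :=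
    hcos.eventually (lt_mem_nhds one_pos)
  refine h2.congr' ?_
  filter_upwards [hne, hpos] with x hx hp
  have a : Real.cos x - 1 ≠ 0 := sub_ne_zero.mpr hx
  have b : 1 + Real.cos x ≠ 0 := by positivity
  have c : Real.sin x ^ 2 = -((Real.cos x - 1) * (1 + Real.cos x)) := by
    rw [Real.sin_sq]; ring
  simp only [Pi.div_apply, Function.comp, slope_def_field]
  rw [c, div_neg, one_mul, neg_div, div_div]
end

section
/- Let J := (1/π)·∫_0^π cos(cos t) dt, k_a := 2(cos 1 − J)/(cos 1 − sin 1), and k_b := (1 − J)/(1 − sin 1). Then k_a > k_b. -/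
open Real MeasureTheory intervalIntegral

lemma aux_nonneg (f f' : ℝ → ℝ) (h : ∀ x, HasDerivAt f (f' x) x) (h0 : f 0 = 0)
    (hp : ∀ x, 0 ≤ x → 0 ≤ f' x) (x : ℝ) (hx : 0 ≤ x) : 0 ≤ f x := by
  have hm : MonotoneOn f (Set.Ici 0) := by
    apply monotoneOn_of_deriv_nonneg (convex_Ici 0)
    · exact fun y _ => (h y).continuousAt.continuousWithinAt
    · exact fun y _ => (h y).differentiableAt.differentiableWithinAt
    · intro y hy
      rw [(h y).deriv]
      rw [interior_Ici] at hy
      exact hp y (le_of_lt hy)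
  have := hm (Set.mem_Ici.2 le_rfl) (Set.mem_Ici.2 hx) hx
  linarith

lemma aux_sin3 (x : ℝ) (hx : 0 ≤ x) : 0 ≤ Real.sin x - (x - x ^ 3 / 6) := by
  rcases hx.eq_or_lt with rfl | h
  · simp
  · linarith [sin_gt_sub_cube h]

lemma aux_cos4 (x : ℝ) (hx : 0 ≤ x) : 0 ≤ (1 - x ^ 2 / 2 + x ^ 4 / 24) - Real.cos x := by
  refine aux_nonneg (fun x => (1 - x ^ 2 / 2 + x ^ 4 / 24) - Real.cos x) _ (fun x => ?_) (by simp)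
    aux_sin3 x hx
  have := ((((hasDerivAt_pow 2 x).div_const 2).const_sub 1).add
    ((hasDerivAt_pow 4 x).div_const 24)).sub (Real.hasDerivAt_cos x)
  refine this.congr_deriv ?_
  push_cast; ring

lemma aux_sin5 (x : ℝ) (hx : 0 ≤ x) : 0 ≤ (x - x ^ 3 / 6 + x ^ 5 / 120) - Real.sin x := by
  refine aux_nonneg (fun x => (x - x ^ 3 / 6 + x ^ 5 / 120) - Real.sin x) _ (fun x => ?_) (by simp)
    aux_cos4 x hx
  have := (((hasDerivAt_id x).sub ((hasDerivAt_pow 3 x).div_const 6)).add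
    ((hasDerivAt_pow 5 x).div_const 120)).sub (Real.hasDerivAt_sin x)
  refine this.congr_deriv ?_
  push_cast; ring

lemma aux_cos6 (x : ℝ) (hx : 0 ≤ x) :
    0 ≤ Real.cos x - (1 - x ^ 2 / 2 + x ^ 4 / 24 - x ^ 6 / 720) := by
  refine aux_nonneg (fun x => Real.cos x - (1 - x ^ 2 / 2 + x ^ 4 / 24 - x ^ 6 / 720)) _
    (fun x => ?_) (by simp) aux_sin5 x hx
  have := (Real.hasDerivAt_cos x).sub (((((hasDerivAt_pow 2 x).div_const 2).const_sub 1).add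
    ((hasDerivAt_pow 4 x).div_const 24)).sub ((hasDerivAt_pow 6 x).div_const 720))
  refine this.congr_deriv ?_
  push_cast; ring

lemma aux_cos6' (x : ℝ) :
    1 - x ^ 2 / 2 + x ^ 4 / 24 - x ^ 6 / 720 ≤ Real.cos x := by
  rcases le_total 0 x with h | h
  · linarith [aux_cos6 x h]
  · have := aux_cos6 (-x) (by linarith)
    rw [Real.cos_neg] at this
    have e : (-x) ^ 2 = x ^ 2 ∧ (-x) ^ 4 = x ^ 4 ∧ (-x) ^ 6 = x ^ 6 :=
      ⟨by ring, by ring, by ring⟩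
    rw [e.1, e.2.1, e.2.2] at this
    linarith

lemma aux_J : π * (1763 / 2304) ≤ ∫ t in (0:ℝ)..π, Real.cos (Real.cos t) := by
  have h2 : ∫ t in (0:ℝ)..π, Real.cos t ^ 2 = π / 2 := by
    rw [integral_cos_sq]; simp
  have h4 : ∫ t in (0:ℝ)..π, Real.cos t ^ 4 = 3 * π / 8 := by
    have := integral_cos_pow (a := 0) (b := π) 2
    rw [h2] at this
    norm_num at this
    rw [this]; ring
  have h6 : ∫ t in (0:ℝ)..π, Real.cos t ^ 6 = 5 * π / 16 := by
    have := integral_cos_pow (a := 0) (b := π) 4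
    rw [h4] at this
    norm_num at this
    rw [this]; ring
  have i : ∀ f : ℝ → ℝ, Continuous f → IntervalIntegrable f volume 0 π :=
    fun f hf => hf.intervalIntegrable _ _
  have key : ∫ t in (0:ℝ)..π, (1 - Real.cos t ^ 2 / 2 + Real.cos t ^ 4 / 24 - Real.cos t ^ 6 / 720)
      = π * (1763 / 2304) := by
    rw [integral_sub (i _ (by fun_prop)) (i _ (by fun_prop)),
      integral_add (i _ (by fun_prop)) (i _ (by fun_prop)),
      integral_sub (i _ (by fun_prop)) (i _ (by fun_prop)),
      intervalIntegral.integral_div, intervalIntegral.integral_div, intervalIntegral.integral_div, h2, h4, h6]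
    simp
    ring
  rw [← key]
  exact integral_mono_on pi_pos.le (i _ (by fun_prop)) (i _ (by fun_prop))
    (fun t _ => aux_cos6' _)

theorem stmt_17 (J ka kb : ℝ)
    (hJ : J = (1 / π) * ∫ t in (0:ℝ)..π, Real.cos (Real.cos t))
    (hka : ka = 2 * (Real.cos 1 - J) / (Real.cos 1 - Real.sin 1))
    (hkb : kb = (1 - J) / (1 - Real.sin 1)) :
    ka > kb := by
  have hJ1 : 1763 / 2304 ≤ J := by
    rw [hJ, one_div, inv_mul_eq_div, le_div_iff₀ pi_pos]
    linarith [aux_J]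
  have hs := aux_sin5 1 (by norm_num)
  have hs' := aux_sin3 1 (by norm_num)
  have hc := aux_cos4 1 (by norm_num)
  norm_num at hs hs' hc
  rw [hka, hkb, gt_iff_lt]
  generalize Real.sin 1 = s at *
  generalize Real.cos 1 = c at *
  have e : 2 * (c - J) / (c - s) = 2 * (J - c) / (s - c) := by
    rw [← neg_sub J c, ← neg_sub s c, mul_neg, neg_div_neg_eq]
  rw [e, div_lt_div_iff₀ (by linarith) (by linarith)]
  have a1 : 0 ≤ (J - 1763/2304) * (2 * (1 - s) + (s - c)) :=
    mul_nonneg (by linarith) (by linarith)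
  have a2 : 0 ≤ (13/24 - c) * (2 * (101/120 - s)) :=
    mul_nonneg (by linarith) (by linarith)
  nlinarith
end
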